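/- Fix numbers of jobs n and machines m, values v : Fin n → ℝ with v ≥ 0, sizes s : Fin n → ℝ with s > 0, and capacities c : Fin m → ℝ with c ≥ 0. There exists a map A from edge sets E ⊆ Fin n × Fin m to finitely supported probability distributions over assignments x : Fin n → Option (Fin m) such that: (i) every assignment in the support of A(E) is feasible for MKP[E]; (ii) A is truthful in expectation: for every E, every job i, and every set E'_i of pairs with first coordinate i, letting E' = (E \ E_i) ∪ E'_i, the expected value of v(i)·[x assigns i to some machine j with (i,j) ∈ E] under A(E) is at least the expected value of v(i)·[x assigns i to some machine j with (i,j) ∈ E] under A(E'); and (iii) for every E, 2 · E_{x ~ A(E)}[welfare(x)] ≥ the maximum welfare of a feasible assignment for MKP[E]. That is, there is a 2-approximate mechanism without money for the multiple knapsack problem that is truthful-in-expectation in the private graph model. -/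

import Mathlib

/-- Feasibility of an assignment for the multiple knapsack problem MKP[E]. -/
def MKPFeasible {n m : ℕ} (s : Fin n → ℝ) (c : Fin m → ℝ)
    (E : Finset (Fin n × Fin m)) (x : Fin n → Option (Fin m)) : Prop :=
  (∀ i j, x i = some j → (i, j) ∈ E) ∧
    ∀ j, ∑ i ∈ Finset.univ.filter (fun i => x i = some j), s i ≤ c j

/-- Welfare of an assignment in the multiple knapsack problem. -/
def MKPWelfare {n m : ℕ} (v : Fin n → ℝ) (x : Fin n → Option (Fin m)) : ℝ :=
  ∑ i ∈ Finset.univ.filter (fun i => x i ≠ none), v i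

/-!
A fractional assignment is a flow from jobs to machines, measured in units of size. Give the jobs
distinct positive weights ordered compatibly with the value densities `v i / s i`, and let each
edge set choose a flow of maximum weight. By max-flow min-cut, this flow serves every set of
top-priority jobs as well as any flow does. Since a report of job `i` does not affect the amounts
that the jobs of higher priority can get in total, misreporting cannot increase the flow that `i`
sends along its true edges. By the layer-cake formula, the flow also maximizes the total value of
fractional assignments.

Shmoys–Tardos rounding splits each machine into unit slots and decomposes the fractional assignment
into matchings of jobs to slots. In each matching, the jobs in the first slots and the jobs in the
remaining slots both form feasible assignments. Choosing one of the two with probability `1 / 2`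
scales every marginal by exactly `1 / 2`, which preserves truthfulness and costs a factor of two.
-/

open Finset in
lemma dotProduct_le_dotProduct_of_forall_sum_filter_lt_le
    {ι : Type*} [Fintype ι] {w a b : ι → ℝ} (hw : ∀ i, 0 ≤ w i)
    (h : ∀ t, ∑ i with t < w i, a i ≤ ∑ i with t < w i, b i) : w ⬝ᵥ a ≤ w ⬝ᵥ b := by
  have hlevel : ∀ (a : ι → ℝ) (t : ℝ),
      ∑ i with t < w i, a i = ∑ i, (Set.Iio (w i)).indicator (fun _ => a i) t := fun a t => by
    simp [sum_filter, Set.indicator_apply]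
  have hint : ∀ (a : ι → ℝ) (i : ι), MeasureTheory.Integrable
      ((Set.Iio (w i)).indicator fun _ => a i) (MeasureTheory.volume.restrict (Set.Ioi 0)) := by
    intro a i
    rw [MeasureTheory.integrable_indicator_iff measurableSet_Iio]
    simp [MeasureTheory.IntegrableOn, Set.Iio_inter_Ioi,
      MeasureTheory.Measure.restrict_restrict measurableSet_Iio]
  have hsum : ∀ a : ι → ℝ, w ⬝ᵥ a = ∫ t in Set.Ioi 0, ∑ i with t < w i, a i := by
    intro a
    simp_rw [hlevel]
    rw [MeasureTheory.integral_finsetSum _ fun i _ => hint a i]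
    refine sum_congr rfl fun i _ => ?_
    rw [MeasureTheory.integral_indicator_const _ measurableSet_Iio]
    simp [MeasureTheory.measureReal_restrict_apply measurableSet_Iio, Set.Iio_inter_Ioi, hw i]
  rw [hsum, hsum]
  refine MeasureTheory.integral_mono ?_ ?_ h
  all_goals
    simp_rw [hlevel]
    exact MeasureTheory.integrable_finsetSum _ fun i _ => hint _ i

lemma exists_injective_pos_of_lt_imp_lt {n : ℕ} (w : Fin n → ℝ) :
    ∃ W : Fin n → ℝ, Function.Injective W ∧ (∀ i, 0 < W i) ∧ ∀ k l, w k < w l → W k < W l := by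
  set σ := Tuple.sort w
  refine ⟨fun i => (σ.symm i : ℕ) + 1, fun i k h => ?_, fun i => by positivity, fun k l h => ?_⟩
  · simpa [Fin.val_inj] using h
  · by_contra! hle
    have hσ : σ.symm l ≤ σ.symm k := by simpa using hle
    simpa [σ, h.not_ge] using Tuple.monotone_sort w hσ

section Flow

open Finset

variable {ι κ : Type*}

section Preflow

variable [Fintype ι]

/-- A nonnegative flow from jobs to machines along the edge relation `F` that respects the machine
capacities `c`, with no bound on the outflow of a job. -/
structure IsPreflow (c : κ → ℝ) (F : ι → κ → Prop) (u : ι → κ → ℝ) : Prop where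
  nonneg : ∀ i j, 0 ≤ u i j
  eq_zero : ∀ i j, ¬F i j → u i j = 0
  inflow_le : ∀ j, ∑ i, u i j ≤ c j

lemma convex_setOf_isPreflow (c : κ → ℝ) (F : ι → κ → Prop) :
    Convex ℝ {u | IsPreflow c F u} := by
  intro u hu u' hu' a b ha hb hab
  refine ⟨fun i j => ?_, fun i j h => ?_, fun j => ?_⟩
  · exact add_nonneg (mul_nonneg ha (hu.nonneg i j)) (mul_nonneg hb (hu'.nonneg i j))
  · simp [hu.eq_zero i j h, hu'.eq_zero i j h]
  · calc ∑ i, (a • u + b • u') i j = a * ∑ i, u i j + b * ∑ i, u' i j := by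
          simp [sum_add_distrib, mul_sum]
      _ ≤ a * c j + b * c j := by gcongr <;> [exact hu.inflow_le j; exact hu'.inflow_le j]
      _ = c j := by rw [← add_mul, hab, one_mul]

variable [DecidableEq ι] [DecidableEq κ] {c : κ → ℝ} {F : ι → κ → Prop} {y : ι → κ → ℝ}
  {i : ι} {j : κ} {δ : ℝ}

lemma IsPreflow.add_single (hy : IsPreflow c F y) (hF : F i j) (hδ : 0 ≤ δ)
    (hj : ∑ k, y k j + δ ≤ c j) : IsPreflow c F (y + Pi.single i (Pi.single j δ)) := by
  refine ⟨fun k l => add_nonneg (hy.nonneg k l) ?_, fun k l h => ?_, fun l => ?_⟩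
  · simp only [Pi.single_apply, ite_apply, Pi.zero_apply]
    split_ifs <;> simp [hδ]
  · have : ¬(k = i ∧ l = j) := by rintro ⟨rfl, rfl⟩; exact h hF
    simp only [Pi.add_apply, hy.eq_zero k l h, Pi.single_apply, ite_apply, Pi.zero_apply]
    grind
  · obtain rfl | hl := eq_or_ne l j
    · simpa [sum_add_distrib, Pi.single_apply, ite_apply] using hj
    · simpa [sum_add_distrib, Pi.single_apply, ite_apply, hl] using hy.inflow_le l

lemma IsPreflow.sub_single (hy : IsPreflow c F y) (hδ : 0 ≤ δ) (hij : δ ≤ y i j) :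
    IsPreflow c F (y - Pi.single i (Pi.single j δ)) := by
  refine ⟨fun k l => ?_, fun k l h => ?_, fun l => ?_⟩
  · have := hy.nonneg k l
    simp only [Pi.sub_apply, Pi.single_apply, ite_apply, Pi.zero_apply]
    grind
  · have := hy.eq_zero k l h
    simp only [Pi.sub_apply, Pi.single_apply, ite_apply, Pi.zero_apply]
    grind
  · refine le_trans (sum_le_sum fun k _ => sub_le_self _ ?_) (hy.inflow_le l)
    simp only [Pi.single_apply, ite_apply, Pi.zero_apply]
    split_ifs <;> simp [hδ]

end Preflow

variable [Fintype κ]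

/-- The total amount a flow `u` carries out of each job, as a linear function of `u`. -/
def outflow : (ι → κ → ℝ) →ₗ[ℝ] ι → ℝ where
  toFun u i := ∑ j, u i j
  map_add' u u' := by ext i; simp [sum_add_distrib]
  map_smul' a u := by ext i; simp [mul_sum]

lemma outflow_apply (u : ι → κ → ℝ) (i : ι) : outflow u i = ∑ j, u i j := rfl

lemma outflow_single [DecidableEq ι] [DecidableEq κ] (i : ι) (j : κ) (a : ℝ) :
    outflow (Pi.single i (Pi.single j a)) = Pi.single i a := by
  ext k
  obtain rfl | hk := eq_or_ne k i
  · simp [outflow_apply]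
  · simp [outflow_apply, hk]

variable [Fintype ι]

/-- A preflow in which the outflow of each job is at most its size: the fractional assignments of
the knapsack relaxation, measured in units of size. -/
structure IsFlow (s : ι → ℝ) (c : κ → ℝ) (F : ι → κ → Prop) (u : ι → κ → ℝ) : Prop
    extends IsPreflow c F u where
  outflow_le : ∀ i, outflow u i ≤ s i

variable {s : ι → ℝ} {c : κ → ℝ} {F F' : ι → κ → Prop} {y y' z u : ι → κ → ℝ} {W : ι → ℝ}

lemma isCompact_setOf_isFlow (s : ι → ℝ) (c : κ → ℝ) (F : ι → κ → Prop) :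
    IsCompact {u | IsFlow s c F u} := by
  have hset : {u | IsFlow s c F u} = (⋂ (i) (j), {u | 0 ≤ u i j}) ∩
      (⋂ (i) (j) (_ : ¬F i j), {u | u i j = 0}) ∩ (⋂ j, {u | ∑ i, u i j ≤ c j}) ∩
      ⋂ i, {u | ∑ j, u i j ≤ s i} := by
    ext u
    simp only [Set.mem_inter_iff, Set.mem_iInter, Set.mem_ofPred_eq]
    exact ⟨fun h => ⟨⟨⟨h.nonneg, h.eq_zero⟩, h.inflow_le⟩, h.outflow_le⟩,
      fun h => ⟨⟨h.1.1.1, h.1.1.2, h.1.2⟩, h.2⟩⟩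
  have hclosed : IsClosed {u | IsFlow s c F u} := by
    rw [hset]
    refine (((isClosed_iInter fun i => isClosed_iInter fun j => ?_).inter
      (isClosed_iInter fun i => isClosed_iInter fun j => isClosed_iInter fun _ => ?_)).inter
      (isClosed_iInter fun j => ?_)).inter (isClosed_iInter fun i => ?_)
    · exact isClosed_le (by fun_prop) (by fun_prop)
    · exact isClosed_eq (by fun_prop) (by fun_prop)
    · exact isClosed_le (by fun_prop) (by fun_prop)
    · exact isClosed_le (by fun_prop) (by fun_prop)
  refine (isCompact_Icc (a := 0) (b := fun i _ => s i)).of_isClosed_subset hclosed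
    fun u hu => ⟨hu.nonneg, fun i j => ?_⟩
  exact (single_le_sum (fun j _ => hu.nonneg i j) (mem_univ j)).trans (hu.outflow_le i)

lemma exists_isFlow_forall_dotProduct_outflow_le (hs : ∀ i, 0 ≤ s i) (hc : ∀ j, 0 ≤ c j)
    (F : ι → κ → Prop) (W : ι → ℝ) :
    ∃ y, IsFlow s c F y ∧ ∀ z, IsFlow s c F z → W ⬝ᵥ outflow z ≤ W ⬝ᵥ outflow y := by
  have hzero : IsFlow s c F 0 := ⟨⟨by simp, by simp, by simpa using hc⟩, by simpa using hs⟩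
  have hcont : Continuous fun u : ι → κ → ℝ => W ⬝ᵥ outflow u := by
    simp only [dotProduct, outflow_apply]
    fun_prop
  obtain ⟨y, hy, hmax⟩ :=
    (isCompact_setOf_isFlow s c F).exists_isMaxOn ⟨0, hzero⟩ hcont.continuousOn
  exact ⟨y, hy, fun z hz => hmax hz⟩

/-- The cone of directions in which the outflow of `y` can be changed by an infinitesimal move
inside the polytope of preflows. It plays the role of the residual graph in the max-flow min-cut
argument: concatenating residual paths is addition in the cone. -/
def residualCone (c : κ → ℝ) (F : ι → κ → Prop) (y : ι → κ → ℝ) : ConvexCone ℝ (ι → ℝ) :=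
  ConvexCone.hull ℝ ((fun u => outflow u - outflow y) '' {u | IsPreflow c F u})

lemma mem_residualCone {d : ι → ℝ} :
    d ∈ residualCone c F y ↔
      ∃ a : ℝ, 0 < a ∧ ∃ u, IsPreflow c F u ∧ a • (outflow u - outflow y) = d := by
  have hconvex : Convex ℝ ((fun u => outflow u - outflow y) '' {u | IsPreflow c F u}) := by
    simpa only [Set.image_image, neg_add_eq_sub] using
      ((convex_setOf_isPreflow c F).linear_image outflow).translate (-outflow y)
  simp only [residualCone, ConvexCone.mem_hull_of_convex hconvex, Set.mem_smul_set,
    Set.exists_mem_image, Set.mem_ofPred_eq]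

namespace IsPreflow

lemma zero_mem_residualCone (hy : IsPreflow c F y) : 0 ∈ residualCone c F y :=
  mem_residualCone.2 ⟨1, one_pos, y, hy, by simp⟩

variable [DecidableEq ι] {i k : ι} {j : κ}

lemma single_mem_residualCone (hy : IsPreflow c F y) (hF : F i j) (hj : ∑ k, y k j < c j) :
    Pi.single i 1 ∈ residualCone c F y := by
  classical
  have hδ : 0 < c j - ∑ k, y k j := sub_pos.2 hj
  refine mem_residualCone.2 ⟨_, inv_pos.2 hδ, _, hy.add_single hF hδ.le (by simp), ?_⟩
  rw [map_add, outflow_single, add_sub_cancel_left, ← Pi.single_smul, smul_eq_mul,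
    inv_mul_cancel₀ hδ.ne']

lemma single_sub_single_mem_residualCone (hy : IsPreflow c F y) (hF : F i j) (hk : 0 < y k j) :
    Pi.single i 1 - Pi.single k 1 ∈ residualCone c F y := by
  classical
  have hmove : IsPreflow c F
      (y - Pi.single k (Pi.single j (y k j)) + Pi.single i (Pi.single j (y k j))) := by
    refine (hy.sub_single hk.le le_rfl).add_single hF hk.le ?_
    simpa [Pi.single_apply, ite_apply] using hy.inflow_le j
  refine mem_residualCone.2 ⟨_, inv_pos.2 hk, _, hmove, ?_⟩
  have hdiff : outflow y - Pi.single k (y k j) + Pi.single i (y k j) - outflow y =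
      Pi.single i (y k j) - Pi.single k (y k j) := by abel
  rw [map_add, map_sub, outflow_single, outflow_single, hdiff, smul_sub, ← Pi.single_smul,
    ← Pi.single_smul, smul_eq_mul, inv_mul_cancel₀ hk.ne']

end IsPreflow

/-- Only the outflow of `k` may grow along `d`, so a short enough step along `d` is again a flow. -/
lemma IsFlow.dotProduct_le_zero_of_mem_residualCone (hy : IsFlow s c F y)
    (hmax : ∀ z, IsFlow s c F z → W ⬝ᵥ outflow z ≤ W ⬝ᵥ outflow y) {d : ι → ℝ}
    (hd : d ∈ residualCone c F y) {k : ι} (hk : outflow y k < s k) (hdk : ∀ i ≠ k, d i ≤ 0) :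
    W ⬝ᵥ d ≤ 0 := by
  obtain ⟨a, ha, u, hu, rfl⟩ := mem_residualCone.1 hd
  set e := outflow u - outflow y
  have he : ∀ i ≠ k, e i ≤ 0 := fun i hi => nonpos_of_mul_nonpos_right (hdk i hi) ha
  obtain ⟨b, hb, hbk⟩ := exists_pos_mul_lt (sub_pos.2 hk) (e k)
  set t := min b 1
  have ht : 0 < t := lt_min hb one_pos
  have hout : outflow ((1 - t) • y + t • u) = outflow y + t • e := by
    simp only [map_add, map_smul, e]
    module
  have hflow : IsFlow s c F ((1 - t) • y + t • u) := by
    refine ⟨convex_setOf_isPreflow c F hy.toIsPreflow hu (sub_nonneg.2 (min_le_right _ _)) ht.le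
      (sub_add_cancel 1 t), fun i => ?_⟩
    rw [hout, Pi.add_apply, Pi.smul_apply, smul_eq_mul]
    obtain rfl | hi := eq_or_ne i k
    · obtain h | h := le_total (e i) 0
      · linarith [mul_nonpos_of_nonneg_of_nonpos ht.le h]
      · linarith [mul_le_mul_of_nonneg_right (min_le_left b 1) h]
    · linarith [mul_nonpos_of_nonneg_of_nonpos ht.le (he i hi), hy.outflow_le i]
  have hle := hmax _ hflow
  rw [hout, dotProduct_add, dotProduct_smul, smul_eq_mul, add_le_iff_nonpos_right] at hle
  rw [dotProduct_smul]
  exact mul_nonpos_of_nonneg_of_nonpos ha.le (nonpos_of_mul_nonpos_right hle ht)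

section Cut

variable [DecidableEq ι] {R S : Finset ι} {N : Finset κ}

lemma IsFlow.sum_outflow_le_cut (hz : IsFlow s c F z) (hRS : R ⊆ S)
    (hN : ∀ i ∈ R, ∀ j, F i j → j ∈ N) :
    ∑ i ∈ S, outflow z i ≤ ∑ i ∈ S \ R, s i + ∑ j ∈ N, c j := by
  rw [← sum_sdiff hRS]
  refine add_le_add (sum_le_sum fun i _ => hz.outflow_le i) ?_
  calc ∑ i ∈ R, outflow z i = ∑ i ∈ R, ∑ j ∈ N, z i j := sum_congr rfl fun i hi =>
        (sum_subset (subset_univ N) fun j _ hj => hz.eq_zero i j (mt (hN i hi j) hj)).symm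
    _ = ∑ j ∈ N, ∑ i ∈ R, z i j := sum_comm
    _ ≤ ∑ j ∈ N, ∑ i, z i j := sum_le_sum fun j _ =>
        sum_le_sum_of_subset_of_nonneg (subset_univ R) fun i _ _ => hz.nonneg i j
    _ ≤ ∑ j ∈ N, c j := sum_le_sum fun j _ => hz.inflow_le j

lemma cut_le_sum_outflow (hy : ∀ i j, 0 ≤ y i j) (hRS : R ⊆ S)
    (hsat : ∀ i ∈ S \ R, s i ≤ outflow y i) (hfull : ∀ j ∈ N, c j ≤ ∑ i, y i j)
    (hN : ∀ j ∈ N, ∀ i ∉ R, y i j = 0) :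
    ∑ i ∈ S \ R, s i + ∑ j ∈ N, c j ≤ ∑ i ∈ S, outflow y i := by
  rw [← sum_sdiff hRS]
  refine add_le_add (sum_le_sum hsat) ?_
  calc ∑ j ∈ N, c j ≤ ∑ j ∈ N, ∑ i, y i j := sum_le_sum hfull
    _ = ∑ j ∈ N, ∑ i ∈ R, y i j := sum_congr rfl fun j hj =>
        (sum_subset (subset_univ R) fun i _ hi => hN j hj i hi).symm
    _ = ∑ i ∈ R, ∑ j ∈ N, y i j := sum_comm
    _ ≤ ∑ i ∈ R, outflow y i := sum_le_sum fun i _ =>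
        sum_le_sum_of_subset_of_nonneg (subset_univ N) fun j _ _ => hy i j

end Cut

/-- A flow that serves every set of top-priority jobs as well as any flow does, for all such sets
at once. Only the order of the priorities `W` matters, and ties are never split. -/
structure IsGreedyFlow (W s : ι → ℝ) (c : κ → ℝ) (F : ι → κ → Prop) (y : ι → κ → ℝ) : Prop
    extends IsFlow s c F y where
  sum_outflow_le : ∀ z, IsFlow s c F z → ∀ S : Finset ι, (∀ k ∈ S, ∀ l ∉ S, W l < W k) →
    ∑ i ∈ S, outflow z i ≤ ∑ i ∈ S, outflow y i

/-- The job `l` can be reached in the residual graph of `y` from an unsaturated job of `S`: the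
flow out of some unsaturated job of `S` can be increased at the sole expense of `l`. -/
def ResidualReachable [DecidableEq ι] (s : ι → ℝ) (c : κ → ℝ) (F : ι → κ → Prop) (y : ι → κ → ℝ)
    (S : Finset ι) (l : ι) : Prop :=
  ∃ k ∈ S, outflow y k < s k ∧ Pi.single k 1 - Pi.single l 1 ∈ residualCone c F y

section ResidualReachable

variable [DecidableEq ι] {S : Finset ι} {i l : ι} {j : κ}

lemma IsFlow.residualReachable_of_outflow_lt (hy : IsFlow s c F y) (hi : i ∈ S)
    (hlt : outflow y i < s i) : ResidualReachable s c F y S i :=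
  ⟨i, hi, hlt, by simpa only [sub_self] using hy.zero_mem_residualCone⟩

lemma ResidualReachable.of_pos (hl : ResidualReachable s c F y S l) (hy : IsPreflow c F y)
    (hlj : F l j) (hij : 0 < y i j) : ResidualReachable s c F y S i := by
  obtain ⟨k, hkS, hk, hkl⟩ := hl
  refine ⟨k, hkS, hk, ?_⟩
  simpa only [sub_add_sub_cancel] using
    add_mem hkl (hy.single_sub_single_mem_residualCone hlj hij)

lemma ResidualReachable.mem (hl : ResidualReachable s c F y S l) (hy : IsFlow s c F y)
    (hmax : ∀ z, IsFlow s c F z → W ⬝ᵥ outflow z ≤ W ⬝ᵥ outflow y)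
    (hS : ∀ k ∈ S, ∀ l ∉ S, W l < W k) : l ∈ S := by
  obtain ⟨k, hkS, hk, hkl⟩ := hl
  by_contra hlS
  have hle := hy.dotProduct_le_zero_of_mem_residualCone hmax hkl hk fun i hi => by
    simpa [hi] using (Pi.single_nonneg.2 zero_le_one : 0 ≤ (Pi.single l 1 : ι → ℝ)) i
  rw [dotProduct_sub, dotProduct_single_one, dotProduct_single_one] at hle
  linarith [hS k hkS l hlS]

lemma ResidualReachable.le_inflow (hl : ResidualReachable s c F y S l) (hy : IsFlow s c F y)
    (hW : ∀ i, 0 < W i) (hmax : ∀ z, IsFlow s c F z → W ⬝ᵥ outflow z ≤ W ⬝ᵥ outflow y)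
    (hlj : F l j) : c j ≤ ∑ i, y i j := by
  obtain ⟨k, -, hk, hkl⟩ := hl
  by_contra! hlt
  have hkmem := add_mem hkl (hy.single_mem_residualCone hlj hlt)
  rw [sub_add_cancel] at hkmem
  have hle := hy.dotProduct_le_zero_of_mem_residualCone hmax hkmem hk fun i hi => by simp [hi]
  rw [dotProduct_single_one] at hle
  exact hle.not_gt (hW k)

end ResidualReachable

/-- Max-flow min-cut: the cut consists of the jobs reachable in the residual graph from the
unsaturated jobs of the given set, together with the machines adjacent to them. -/
lemma IsFlow.isGreedyFlow (hy : IsFlow s c F y) (hW : ∀ i, 0 < W i)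
    (hmax : ∀ z, IsFlow s c F z → W ⬝ᵥ outflow z ≤ W ⬝ᵥ outflow y) : IsGreedyFlow W s c F y := by
  classical
  refine ⟨hy, fun z hz S hS => ?_⟩
  set R : Finset ι := {l | ResidualReachable s c F y S l}
  set N : Finset κ := {j | ∃ l ∈ R, F l j}
  have hmem_R : ∀ l, l ∈ R ↔ ResidualReachable s c F y S l := by simp [R]
  have hmem_N : ∀ j, j ∈ N ↔ ∃ l ∈ R, F l j := by simp [N]
  have hRS : R ⊆ S := fun l hl => ((hmem_R l).1 hl).mem hy hmax hS
  refine (hz.sum_outflow_le_cut hRS fun i hi j hij => (hmem_N j).2 ⟨i, hi, hij⟩).trans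
    (cut_le_sum_outflow hy.nonneg hRS (fun i hi => ?_) (fun j hj => ?_) fun j hj b hb => ?_)
  · by_contra! hlt
    obtain ⟨hiS, hiR⟩ := mem_sdiff.1 hi
    exact hiR ((hmem_R i).2 (hy.residualReachable_of_outflow_lt hiS hlt))
  · obtain ⟨l, hl, hlj⟩ := (hmem_N j).1 hj
    exact ((hmem_R l).1 hl).le_inflow hy hW hmax hlj
  · obtain ⟨l, hl, hlj⟩ := (hmem_N j).1 hj
    by_contra hne
    exact hb <| (hmem_R b).2 <| ((hmem_R l).1 hl).of_pos hy.toIsPreflow hlj <|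
      (hy.nonneg b j).lt_of_ne' hne

lemma exists_isGreedyFlow (hW : ∀ i, 0 < W i) (hs : ∀ i, 0 ≤ s i) (hc : ∀ j, 0 ≤ c j)
    (F : ι → κ → Prop) : ∃ y, IsGreedyFlow W s c F y :=
  let ⟨y, hy, hmax⟩ := exists_isFlow_forall_dotProduct_outflow_le hs hc F W
  ⟨y, hy.isGreedyFlow hW hmax⟩

lemma IsFlow.restrict (hu : IsFlow s c F' u) (F : ι → κ → Prop) [∀ i j, Decidable (F i j)] :
    IsFlow s c F fun i j => if F i j then u i j else 0 := by
  have hle : ∀ i j, (if F i j then u i j else 0) ≤ u i j := fun i j => by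
    split_ifs
    exacts [le_rfl, hu.nonneg i j]
  refine ⟨⟨fun i j => ?_, fun i j h => if_neg h, fun j => ?_⟩, fun i => ?_⟩
  · split_ifs
    exacts [hu.nonneg i j, le_rfl]
  · exact (sum_le_sum fun i _ => hle i j).trans (hu.inflow_le j)
  · exact (sum_le_sum fun j _ => hle i j).trans (hu.outflow_le i)

lemma IsFlow.sum_filter_eq_outflow {i : ι} {P : κ → Prop} [DecidablePred P]
    (hu : IsFlow s c F u) (hP : ∀ j, F i j → P j) : ∑ j with P j, u i j = outflow u i :=
  sum_filter_of_ne fun j _ hj => hP j (not_imp_comm.1 (hu.eq_zero i j) hj)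

namespace IsGreedyFlow

lemma sum_filter_le_sum_outflow [∀ i j, Decidable (F i j)] (hy : IsGreedyFlow W s c F y)
    (hu : IsFlow s c F' u) {S : Finset ι} (hS : ∀ k ∈ S, ∀ l ∉ S, W l < W k) :
    ∑ i ∈ S, ∑ j with F i j, u i j ≤ ∑ i ∈ S, outflow y i := by
  simpa only [outflow_apply, sum_filter] using hy.sum_outflow_le _ (hu.restrict F) S hS

/-- Jobs of higher priority than `i` receive the same total under both edge relations, so the
comparison of the totals including `i` is a comparison for `i` alone. -/
lemma sum_filter_le_outflow [∀ i j, Decidable (F i j)] (hW : Function.Injective W)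
    (hy : IsGreedyFlow W s c F y) (hy' : IsGreedyFlow W s c F' y') (i : ι)
    (hF : ∀ k ≠ i, ∀ j, F k j ↔ F' k j) :
    ∑ j with F i j, y' i j ≤ outflow y i := by
  classical
  set T : Finset ι := {k | W i < W k} with hT
  have hiT : i ∉ T := by simp [hT]
  have hne : ∀ k ∈ T, k ≠ i := fun k hk h => hiT (h ▸ hk)
  have htop : ∀ k ∈ T, ∀ l ∉ T, W l < W k := by
    intro k hk l hl
    simp only [hT, mem_filter, mem_univ, true_and, not_lt] at hk hl
    exact hl.trans_lt hk
  have htop_insert : ∀ k ∈ insert i T, ∀ l ∉ insert i T, W l < W k := by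
    intro k hk l hl
    simp only [hT, mem_insert, mem_filter, mem_univ, true_and, not_or, not_lt] at hk hl
    have hli : W l < W i := hl.2.lt_of_ne (hW.ne hl.1)
    obtain rfl | hk := hk
    exacts [hli, hli.trans hk]
  have hle := hy.sum_filter_le_sum_outflow hy'.toIsFlow htop_insert
  have hge := hy'.sum_filter_le_sum_outflow hy.toIsFlow htop
  rw [sum_insert hiT, sum_insert hiT, sum_congr rfl fun k hk =>
    hy'.sum_filter_eq_outflow fun j => (hF k (hne k hk) j).2] at hle
  rw [sum_congr rfl fun k hk =>
    hy.sum_filter_eq_outflow fun j => (hF k (hne k hk) j).1] at hge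
  linarith

end IsGreedyFlow

lemma IsGreedyFlow.dotProduct_outflow_le {w : ι → ℝ} (hy : IsGreedyFlow W s c F y)
    (hw : ∀ i, 0 ≤ w i) (hW : ∀ k l, w k < w l → W k < W l) (hz : IsFlow s c F z) :
    w ⬝ᵥ outflow z ≤ w ⬝ᵥ outflow y := by
  refine dotProduct_le_dotProduct_of_forall_sum_filter_lt_le hw fun t => ?_
  refine hy.sum_outflow_le z hz _ fun k hk l hl => hW l k ?_
  simp only [mem_filter, mem_univ, true_and, not_lt] at hk hl
  exact hl.trans_lt hk

end Flow

section SlotSplit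

open Finset

/-- The length of `[0, t] ∩ [k, k + 1]` (for `0 ≤ t`): the part of slot `k` that is covered after an
amount `t` has been poured into the unit slots `0, 1, 2, …` in order. -/
def slotFill (k : ℕ) (t : ℝ) : ℝ := min t (k + 1) - min t k

lemma slotFill_mono (k : ℕ) : Monotone (slotFill k) := by
  intro t t' h
  simp only [slotFill]
  grind

lemma slotFill_le_one (k : ℕ) (t : ℝ) : slotFill k t ≤ 1 := by
  simp only [slotFill]
  grind

lemma slotFill_of_le {k : ℕ} {t : ℝ} (h : t ≤ k) : slotFill k t = 0 := by
  simp only [slotFill]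
  grind

lemma slotFill_of_ge {k : ℕ} {t : ℝ} (h : k + 1 ≤ t) : slotFill k t = 1 := by
  simp only [slotFill]
  grind

lemma sum_range_slotFill {t : ℝ} (ht : 0 ≤ t) (N : ℕ) :
    ∑ k ∈ range N, slotFill k t = min t N := by
  have := sum_range_sub (fun k : ℕ => min t k) N
  push_cast at this
  simpa [slotFill, ht] using this

/-- A way of splitting the fractional units `z i` of jobs of sizes `s i` over a row of unit slots
such that a job meeting a slot after the first is no larger than the average size in the preceding
slot (the Shmoys–Tardos grouping). -/
structure IsSlotSplit {ι : Type*} [Fintype ι] {N : ℕ} (s z : ι → ℝ) (B : ι → Fin (N + 1) → ℝ) :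
    Prop where
  nonneg : ∀ i k, 0 ≤ B i k
  sum_slots : ∀ i, ∑ k, B i k = z i
  sum_jobs_le : ∀ k, ∑ i, B i k ≤ 1
  size_le : ∀ i (k : Fin N), 0 < B i k.succ → s i ≤ ∑ l, s l * B l k.castSucc

lemma IsSlotSplit.comp_equiv {ι ι' : Type*} [Fintype ι] [Fintype ι'] {N : ℕ} {s z : ι → ℝ}
    {B : ι → Fin (N + 1) → ℝ} (hB : IsSlotSplit s z B) (e : ι' ≃ ι) :
    IsSlotSplit (s ∘ e) (z ∘ e) (B ∘ e) where
  nonneg i := hB.nonneg (e i)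
  sum_slots i := hB.sum_slots (e i)
  sum_jobs_le k := (e.sum_comp fun i => B i k).trans_le (hB.sum_jobs_le k)
  size_le i k h := (hB.size_le (e i) k h).trans_eq (e.sum_comp fun l => s l * B l k.castSucc).symm

variable {n : ℕ} {s z : Fin n → ℝ}

lemma monotone_partialSum (hz : ∀ i, 0 ≤ z i) : Monotone (Fin.partialSum z) :=
  Fin.monotone_iff_le_succ.2 fun i => by simpa [Fin.partialSum_succ] using hz i

lemma partialSum_le_val (hz : ∀ i, z i ≤ 1) (t : Fin (n + 1)) : Fin.partialSum z t ≤ t := by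
  induction t using Fin.induction with
  | zero => simp
  | succ i ih =>
    rw [Fin.partialSum_succ, Fin.val_succ, Nat.cast_add_one]
    exact add_le_add ih (hz i)

/-- The part of job `i` that falls into slot `k` when the jobs are poured into the slots in
order. -/
def slotShare (z : Fin n → ℝ) (i : Fin n) (k : ℕ) : ℝ :=
  slotFill k (Fin.partialSum z i.succ) - slotFill k (Fin.partialSum z i.castSucc)

lemma slotShare_nonneg (hz : ∀ i, 0 ≤ z i) (i : Fin n) (k : ℕ) : 0 ≤ slotShare z i k :=
  sub_nonneg.2 (slotFill_mono k (monotone_partialSum hz i.castSucc_lt_succ.le))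

lemma sum_slotShare (z : Fin n → ℝ) (k : ℕ) :
    ∑ i, slotShare z i k = slotFill k (Fin.partialSum z (Fin.last n)) := by
  have hsum := (Fin.sum_univ_succ fun t => slotFill k (Fin.partialSum z t)).symm.trans
    (Fin.sum_univ_castSucc _)
  rw [Fin.partialSum_zero, slotFill_of_le k.cast_nonneg, zero_add] at hsum
  simp only [slotShare, sum_sub_distrib, hsum, add_sub_cancel_left]

lemma sum_slots_slotShare (hz : ∀ i, 0 ≤ z i) (hz1 : ∀ i, z i ≤ 1) (i : Fin n) :
    ∑ k : Fin (n + 1), slotShare z i k = z i := by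
  have hfill : ∀ t, ∑ k : Fin (n + 1), slotFill k (Fin.partialSum z t) = Fin.partialSum z t := by
    intro t
    have h0 : 0 ≤ Fin.partialSum z t := by
      simpa using monotone_partialSum hz (Fin.zero_le t)
    rw [Fin.sum_univ_eq_sum_range (fun k => slotFill k (Fin.partialSum z t)), sum_range_slotFill h0]
    exact min_eq_left ((partialSum_le_val hz1 t).trans (by exact_mod_cast t.2.le))
  simp only [slotShare, sum_sub_distrib, hfill]
  rw [Fin.partialSum_succ, add_sub_cancel_left]

lemma succ_lt_partialSum_of_slotShare_pos (hz : ∀ i, 0 ≤ z i) {i : Fin n} {k : ℕ}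
    (h : 0 < slotShare z i (k + 1)) : (k + 1 : ℝ) < Fin.partialSum z i.succ := by
  by_contra! hle
  have hle' := (monotone_partialSum hz i.castSucc_lt_succ.le).trans hle
  rw [slotShare, slotFill_of_le (by exact_mod_cast hle), slotFill_of_le (by exact_mod_cast hle'),
    sub_self] at h
  exact h.false

lemma size_le_sum_slotShare (hs : Antitone s) (hz : ∀ i, 0 ≤ z i) {i : Fin n} {k : ℕ}
    (h : 0 < slotShare z i (k + 1)) : s i ≤ ∑ l, s l * slotShare z l k := by
  have hP := monotone_partialSum hz
  have hk := (succ_lt_partialSum_of_slotShare_pos hz h).le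
  have hfull : ∀ t, i.succ ≤ t → slotFill k (Fin.partialSum z t) = 1 := fun t ht =>
    slotFill_of_ge (hk.trans (hP ht))
  have hlater : ∀ l, i < l → slotShare z l k = 0 := fun l hl => by
    rw [slotShare, hfull _ (Fin.succ_le_castSucc_iff.2 hl), hfull _ (Fin.succ_le_succ_iff.2 hl.le),
      sub_self]
  calc s i = ∑ l, s i * slotShare z l k := by
        rw [← mul_sum, sum_slotShare, hfull _ (Fin.le_last _), mul_one]
    _ ≤ ∑ l, s l * slotShare z l k := by
        refine sum_le_sum fun l _ => ?_
        obtain hl | hl := le_or_gt l i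
        · exact mul_le_mul_of_nonneg_right (hs hl) (slotShare_nonneg hz l k)
        · simp only [hlater l hl, mul_zero, le_refl]

lemma isSlotSplit_slotShare (hs : Antitone s) (hz : ∀ i, 0 ≤ z i) (hz1 : ∀ i, z i ≤ 1) :
    IsSlotSplit s z fun i (k : Fin (n + 1)) => slotShare z i k where
  nonneg i k := slotShare_nonneg hz i k
  sum_slots := sum_slots_slotShare hz hz1
  sum_jobs_le k := (sum_slotShare z k).trans_le (slotFill_le_one _ _)
  size_le _ _ h := size_le_sum_slotShare hs hz h

lemma exists_isSlotSplit (s : Fin n → ℝ) (hz : ∀ i, 0 ≤ z i) (hz1 : ∀ i, z i ≤ 1) :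
    ∃ B : Fin n → Fin (n + 1) → ℝ, IsSlotSplit s z B := by
  set σ := Tuple.sort (OrderDual.toDual ∘ s)
  have hs : Antitone (s ∘ σ) :=
    monotone_toDual_comp_iff.1 (Tuple.monotone_sort (OrderDual.toDual ∘ s))
  have hB := (isSlotSplit_slotShare hs (z := z ∘ σ) (fun i => hz (σ i)) fun i =>
    hz1 (σ i)).comp_equiv σ.symm
  simp only [Function.comp_assoc, σ.self_comp_symm, Function.comp_id] at hB
  exact ⟨_, hB⟩

end SlotSplit

section Substochastic

open Finset

variable {α β : Type*}

/-- The partial matching between `α` and `β` that a permutation of `α ⊕ β` induces from left to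
right. -/
def partialMatching (σ : Equiv.Perm (α ⊕ β)) : α ≃. β where
  toFun a := (σ (.inl a)).getRight?
  invFun b := (σ.symm (.inr b)).getLeft?
  inv a b := by
    simp only [Sum.getLeft?_eq_some_iff, Sum.getRight?_eq_some_iff, Equiv.symm_apply_eq]
    exact eq_comm

lemma partialMatching_eq_some_iff {σ : Equiv.Perm (α ⊕ β)} {a : α} {b : β} :
    partialMatching σ a = some b ↔ σ (.inl a) = .inr b :=
  Sum.getRight?_eq_some_iff

variable [Fintype α] [Fintype β] [DecidableEq β] {A : Matrix α β ℝ}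

lemma fromBlocks_mem_doublyStochastic [DecidableEq α] (hA : ∀ a b, 0 ≤ A a b)
    (hrow : ∀ a, ∑ b, A a b ≤ 1) (hcol : ∀ b, ∑ a, A a b ≤ 1) :
    Matrix.fromBlocks (Matrix.diagonal fun a => 1 - ∑ b, A a b) A A.transpose
      (Matrix.diagonal fun b => 1 - ∑ a, A a b) ∈ doublyStochastic ℝ (α ⊕ β) := by
  rw [mem_doublyStochastic_iff_sum]
  refine ⟨?_, ?_, ?_⟩
  · rintro (a | b) (a' | b')
    · simpa [Matrix.diagonal_apply] using ite_nonneg (sub_nonneg.2 (hrow a)) le_rfl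
    · exact hA a b'
    · exact hA a' b
    · simpa [Matrix.diagonal_apply] using ite_nonneg (sub_nonneg.2 (hcol b)) le_rfl
  · rintro (a | b) <;> simp [Fintype.sum_sum_type, Matrix.diagonal_apply]
  · rintro (a | b) <;> simp [Fintype.sum_sum_type, Matrix.diagonal_apply]

lemma mem_convexHull_pequiv_toMatrix (hA : ∀ a b, 0 ≤ A a b) (hrow : ∀ a, ∑ b, A a b ≤ 1)
    (hcol : ∀ b, ∑ a, A a b ≤ 1) :
    A ∈ convexHull ℝ (PEquiv.toMatrix '' {f : α ≃. β | ∀ a, ∀ b ∈ f a, 0 < A a b}) := by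
  classical
  obtain ⟨w, hw, hw1, hwA⟩ :=
    exists_eq_sum_perm_of_mem_doublyStochastic (fromBlocks_mem_doublyStochastic hA hrow hcol)
  have hsum : ∑ σ, w σ • (partialMatching σ).toMatrix = A := by
    ext a b
    have := congr_fun₂ hwA (.inl a) (.inr b)
    simpa [Matrix.sum_apply, PEquiv.toMatrix_apply, partialMatching_eq_some_iff] using this
  have hsupp : ∀ σ, w σ ≠ 0 → ∀ a, ∀ b ∈ partialMatching σ a, 0 < A a b := by
    intro σ hσ a b hab
    rw [← hsum, Matrix.sum_apply]
    refine sum_pos' (fun τ _ => mul_nonneg (hw τ) ?_) ⟨σ, mem_univ σ, ?_⟩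
    · rw [PEquiv.toMatrix_apply]
      positivity
    · simpa [PEquiv.toMatrix_apply, hab] using (hw σ).lt_of_ne' hσ
  have hmem : ∑ σ with w σ ≠ 0, w σ • (partialMatching σ).toMatrix ∈
      convexHull ℝ (PEquiv.toMatrix (α := ℝ) '' {f : α ≃. β | ∀ a, ∀ b ∈ f a, 0 < A a b}) :=
    (convex_convexHull ℝ _).sum_mem (fun σ _ => hw σ) ((sum_filter_ne_zero univ).trans hw1)
      fun σ hσ => subset_convexHull ℝ _ ⟨_, hsupp σ (mem_filter.1 hσ).2, rfl⟩
  rwa [sum_filter_of_ne fun σ _ => mt fun h => by rw [h, zero_smul], hsum] at hmem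

lemma exists_weights_of_mem_convexHull_image {X V : Type*} [Fintype X] [AddCommGroup V]
    [Module ℝ V] {g : X → V} {S : Set X} {v : V} (hv : v ∈ convexHull ℝ (g '' S)) :
    ∃ p : X → ℝ, (∀ x, 0 ≤ p x) ∧ ∑ x, p x = 1 ∧ (∀ x, p x ≠ 0 → x ∈ S) ∧
      ∑ x, p x • g x = v := by
  classical
  obtain ⟨ι, _, w, z, hw, hw1, hz, rfl⟩ := mem_convexHull_iff_exists_fintype.1 hv
  choose x hx hgx using hz
  refine ⟨fun a => ∑ i with x i = a, w i, fun a => sum_nonneg fun i _ => hw i, ?_, fun a ha => ?_,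
    ?_⟩
  · exact (sum_fiberwise _ x w).trans hw1
  · obtain ⟨i, hi, -⟩ := exists_ne_zero_of_sum_ne_zero ha
    exact (mem_filter.1 hi).2 ▸ hx i
  · simp_rw [sum_smul, sum_filter]
    rw [sum_comm]
    simp [hgx]

end Substochastic

section Rounding

open Finset

section Assignment

variable {ι κ τ : Type*} [DecidableEq τ]

/-- The incidence matrix of an assignment of jobs to machines. -/
def assignMatrix [DecidableEq κ] (x : ι → Option κ) : ι → κ → ℝ := fun i j =>
  if x i = some j then 1 else 0

/-- The assignment that sends a job to the machine of the slot it is matched to, where the slots of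
each machine are indexed by `τ` and only those with index in `K` are used. -/
def slotAssign (f : ι ≃. κ × τ) (K : Finset τ) : ι → Option κ := fun i =>
  ((f i).filter fun q => q.2 ∈ K).map Prod.fst

lemma slotAssign_eq_some_iff {f : ι ≃. κ × τ} {K : Finset τ} {i : ι} {j : κ} :
    slotAssign f K i = some j ↔ ∃ k ∈ K, f i = some (j, k) := by
  simp [slotAssign, Option.filter_eq_some_iff, and_comm]

variable [DecidableEq κ]

lemma assignMatrix_slotAssign (f : ι ≃. κ × τ) (K : Finset τ) (i : ι) (j : κ) :
    assignMatrix (slotAssign f K) i j = ∑ k ∈ K, f.toMatrix i (j, k) := by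
  simp only [assignMatrix, slotAssign_eq_some_iff, PEquiv.toMatrix_apply, Option.mem_def]
  cases h : f i with
  | none => simp
  | some q =>
    obtain ⟨j', k⟩ := q
    by_cases hj : j' = j <;> simp [hj]

variable [Fintype ι]

lemma sum_filter_eq_some (x : ι → Option κ) (s : ι → ℝ) (j : κ) :
    ∑ i with x i = some j, s i = ∑ i, s i * assignMatrix x i j := by
  simp [assignMatrix, sum_filter]

lemma sum_filter_slotAssign_eq_some (f : ι ≃. κ × τ) (K : Finset τ) (s : ι → ℝ) (j : κ) :
    ∑ i with slotAssign f K i = some j, s i = ∑ k ∈ K, ∑ i, s i * f.toMatrix i (j, k) := by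
  simp only [sum_filter_eq_some, assignMatrix_slotAssign, mul_sum]
  exact sum_comm

lemma sum_mul_pequiv_toMatrix_le {β : Type*} [DecidableEq β] {f : ι ≃. β} {b : β} {s : ι → ℝ}
    {C : ℝ} (hC : 0 ≤ C) (hs : ∀ i, f i = some b → s i ≤ C) : ∑ i, s i * f.toMatrix i b ≤ C := by
  classical
  simp only [PEquiv.toMatrix_apply, ← PEquiv.mem_iff_mem f]
  cases h : f.symm b with
  | none => simpa using hC
  | some i => simpa using hs i ((PEquiv.mem_iff_mem f).1 h)

end Assignment

variable {n m N : ℕ} {s : Fin n → ℝ} {c : Fin m → ℝ} {E : Finset (Fin n × Fin m)}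
  {u : Fin n → Fin m → ℝ} {f : Fin n ≃. Fin m × Fin (N + 1)} {B : Fin m → Fin n → Fin (N + 1) → ℝ}

/-- The edges of `E` along which the job fits on the machine by itself. Flows are restricted to
these edges because rounding may leave a single job alone in the first slot of a machine. -/
def FittingEdge (s : Fin n → ℝ) (c : Fin m → ℝ) (E : Finset (Fin n × Fin m)) (i : Fin n)
    (j : Fin m) : Prop :=
  (i, j) ∈ E ∧ s i ≤ c j

lemma mkpFeasible_slotAssign_zero (hc : ∀ j, 0 ≤ c j)
    (hf : ∀ i j k, f i = some (j, k) → FittingEdge s c E i j) :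
    MKPFeasible s c E (slotAssign f {0}) := by
  refine ⟨fun i j hij => ?_, fun j => ?_⟩
  · obtain ⟨k, -, hk⟩ := slotAssign_eq_some_iff.1 hij
    exact (hf i j k hk).1
  · rw [sum_filter_slotAssign_eq_some, sum_singleton]
    exact sum_mul_pequiv_toMatrix_le (hc j) fun i hi => (hf i j 0 hi).2

lemma mkpFeasible_slotAssign_succ {y : Fin n → Fin m → ℝ} (hs : ∀ i, 0 ≤ s i)
    (hB : ∀ j, IsSlotSplit s (fun i => y i j) (B j)) (hy : ∀ j, ∑ i, s i * y i j ≤ c j)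
    (hfE : ∀ i j k, f i = some (j, k) → (i, j) ∈ E)
    (hfB : ∀ i j k, f i = some (j, k) → 0 < B j i k) :
    MKPFeasible s c E (slotAssign f (univ.map (Fin.succEmb N))) := by
  refine ⟨fun i j hij => ?_, fun j => ?_⟩
  · obtain ⟨k, -, hk⟩ := slotAssign_eq_some_iff.1 hij
    exact hfE i j k hk
  have hload : ∀ k, 0 ≤ ∑ i, s i * B j i k := fun k =>
    sum_nonneg fun i _ => mul_nonneg (hs i) ((hB j).nonneg i k)
  rw [sum_filter_slotAssign_eq_some, sum_map]
  calc ∑ k : Fin N, ∑ i, s i * f.toMatrix i (j, k.succ)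
      ≤ ∑ k : Fin N, ∑ i, s i * B j i k.castSucc := sum_le_sum fun k _ =>
        sum_mul_pequiv_toMatrix_le (hload _) fun i hi => (hB j).size_le i k (hfB i j _ hi)
    _ ≤ ∑ k, ∑ i, s i * B j i k := by
        rw [Fin.sum_univ_castSucc fun k => ∑ i, s i * B j i k]
        exact le_add_of_nonneg_right (hload _)
    _ = ∑ i, s i * y i j := by
        rw [sum_comm]
        simp only [← mul_sum, (hB j).sum_slots]
    _ ≤ c j := hy j

lemma assignMatrix_slotAssign_zero_add_succ (f : Fin n ≃. Fin m × Fin (N + 1)) :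
    assignMatrix (slotAssign f {0}) + assignMatrix (slotAssign f (univ.map (Fin.succEmb N))) =
      fun i j => ∑ k, f.toMatrix i (j, k) := by
  ext i j
  simp only [Pi.add_apply, assignMatrix_slotAssign, sum_singleton, sum_map, Fin.coe_succEmb,
    Fin.sum_univ_succ]

lemma half_sum_toMatrix_mem_convexHull (h0 : MKPFeasible s c E (slotAssign f {0}))
    (hsucc : MKPFeasible s c E (slotAssign f (univ.map (Fin.succEmb N)))) :
    (fun i j => (∑ k, f.toMatrix i (j, k)) / 2) ∈
      convexHull ℝ (assignMatrix '' {x | MKPFeasible s c E x}) := by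
  have hmid := (convex_convexHull ℝ (assignMatrix '' {x | MKPFeasible s c E x})).midpoint_mem
    (subset_convexHull ℝ _ ⟨_, h0, rfl⟩) (subset_convexHull ℝ _ ⟨_, hsucc, rfl⟩)
  rw [midpoint_eq_smul_add, assignMatrix_slotAssign_zero_add_succ] at hmid
  convert hmid using 3
  simp [div_eq_inv_mul]

lemma half_mem_convexHull_assignMatrix {y : Fin n → Fin m → ℝ} (hs : ∀ i, 0 ≤ s i)
    (hy : ∀ i j, 0 ≤ y i j) (hfit : ∀ i j, y i j ≠ 0 → FittingEdge s c E i j)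
    (hrow : ∀ i, ∑ j, y i j ≤ 1) (hcol : ∀ j, ∑ i, s i * y i j ≤ c j) :
    (fun i j => y i j / 2) ∈ convexHull ℝ (assignMatrix '' {x | MKPFeasible s c E x}) := by
  have hy1 : ∀ i j, y i j ≤ 1 := fun i j =>
    (single_le_sum (fun j _ => hy i j) (mem_univ j)).trans (hrow i)
  have hc : ∀ j, 0 ≤ c j := fun j =>
    (sum_nonneg fun i _ => mul_nonneg (hs i) (hy i j)).trans (hcol j)
  choose B hB using fun j => exists_isSlotSplit s (fun i => hy i j) fun i => hy1 i j
  have hBfit : ∀ i j k, 0 < B j i k → FittingEdge s c E i j := fun i j k hk => hfit i j <| by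
    rw [← (hB j).sum_slots i]
    exact (sum_pos' (fun k _ => (hB j).nonneg i k) ⟨k, mem_univ k, hk⟩).ne'
  have hmem := mem_convexHull_pequiv_toMatrix (A := fun i (q : Fin m × Fin (n + 1)) => B q.1 i q.2)
    (fun i q => (hB q.1).nonneg i q.2)
    (fun i => by simpa only [Fintype.sum_prod_type, (hB _).sum_slots] using hrow i)
    fun q => (hB q.1).sum_jobs_le q.2
  let L : Matrix (Fin n) (Fin m × Fin (n + 1)) ℝ →ₗ[ℝ] Fin n → Fin m → ℝ :=
    { toFun M i j := (∑ k, M i (j, k)) / 2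
      map_add' M M' := by ext i j; simp [sum_add_distrib, add_div]
      map_smul' a M := by ext i j; simp [← mul_sum, mul_div_assoc] }
  have hL : L (fun i q => B q.1 i q.2) = fun i j => y i j / 2 := by
    ext i j
    exact congrArg (· / 2) ((hB j).sum_slots i)
  rw [← hL]
  refine convexHull_min ?_ ((convex_convexHull ℝ _).linear_preimage L) hmem
  rintro _ ⟨f, hf, rfl⟩
  have hf' : ∀ i j k, f i = some (j, k) → 0 < B j i k := fun i j k => hf i (j, k)
  exact half_sum_toMatrix_mem_convexHull
    (mkpFeasible_slotAssign_zero hc fun i j k h => hBfit i j k (hf' i j k h))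
    (mkpFeasible_slotAssign_succ hs hB hcol (fun i j k h => (hBfit i j k (hf' i j k h)).1) hf')

lemma mkpWelfare_eq_dotProduct (v : Fin n → ℝ) (x : Fin n → Option (Fin m)) :
    MKPWelfare v x = v ⬝ᵥ outflow (assignMatrix x) := by
  rw [MKPWelfare, sum_filter]
  refine sum_congr rfl fun i _ => ?_
  cases h : x i <;> simp [outflow_apply, assignMatrix, h]

/-- `p` is a lottery over feasible assignments whose expected assignment is half the fractional
assignment described by the flow `u` (which is measured in units of size). -/
structure IsRounding (s : Fin n → ℝ) (c : Fin m → ℝ) (E : Finset (Fin n × Fin m))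
    (u : Fin n → Fin m → ℝ) (p : (Fin n → Option (Fin m)) → ℝ) : Prop where
  nonneg : ∀ x, 0 ≤ p x
  sum_eq_one : ∑ x, p x = 1
  mkpFeasible : ∀ x, p x ≠ 0 → MKPFeasible s c E x
  sum_smul_assignMatrix : ∑ x, p x • assignMatrix x = fun i j => u i j / s i / 2

lemma IsFlow.exists_isRounding (hs : ∀ i, 0 < s i) (hu : IsFlow s c (FittingEdge s c E) u) :
    ∃ p, IsRounding s c E u p := by
  have hmem : (fun i j => u i j / s i / 2) ∈
      convexHull ℝ (assignMatrix '' {x | MKPFeasible s c E x}) := by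
    refine half_mem_convexHull_assignMatrix (fun i => (hs i).le)
      (fun i j => div_nonneg (hu.nonneg i j) (hs i).le) (fun i j hij => ?_) (fun i => ?_)
      fun j => ?_
    · by_contra hF
      exact hij (by rw [hu.eq_zero i j hF, zero_div])
    · rw [← sum_div, div_le_one (hs i)]
      exact hu.outflow_le i
    · simpa only [mul_div_cancel₀ _ (hs _).ne'] using hu.inflow_le j
  obtain ⟨p, hp, hp1, hpS, hpu⟩ := exists_weights_of_mem_convexHull_image hmem
  exact ⟨p, hp, hp1, hpS, hpu⟩

namespace IsRounding

variable {p : (Fin n → Option (Fin m)) → ℝ}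

lemma sum_mul_sum_filter (hp : IsRounding s c E u p) (i : Fin n) (P : Fin m → Prop)
    [DecidablePred P] (a : ℝ) :
    ∑ x, p x * ∑ j with P j ∧ x i = some j, a = a / s i / 2 * ∑ j with P j, u i j := by
  have hmarginal : ∀ j, ∑ x, p x * assignMatrix x i j = u i j / s i / 2 := fun j => by
    simpa using congr_fun₂ hp.sum_smul_assignMatrix i j
  calc ∑ x, p x * ∑ j with P j ∧ x i = some j, a
      = ∑ x, ∑ j with P j, a * (p x * assignMatrix x i j) := by
        refine sum_congr rfl fun x _ => ?_
        rw [mul_sum, ← filter_filter, sum_filter]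
        refine sum_congr rfl fun j _ => ?_
        simp [assignMatrix, mul_comm]
    _ = ∑ j with P j, a * (u i j / s i / 2) := by
        rw [sum_comm]
        simp only [← mul_sum, hmarginal]
    _ = a / s i / 2 * ∑ j with P j, u i j := by
        rw [mul_sum]
        exact sum_congr rfl fun j _ => by ring

lemma sum_mul_mkpWelfare (hp : IsRounding s c E u p) (v : Fin n → ℝ) :
    ∑ x, p x * MKPWelfare v x = (v / s) ⬝ᵥ outflow u / 2 := by
  calc ∑ x, p x * MKPWelfare v x = v ⬝ᵥ outflow (∑ x, p x • assignMatrix x) := by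
        simp only [mkpWelfare_eq_dotProduct, map_sum, map_smul, dotProduct_sum, dotProduct_smul,
          smul_eq_mul]
    _ = (v / s) ⬝ᵥ outflow u / 2 := by
        rw [hp.sum_smul_assignMatrix]
        simp only [dotProduct, outflow_apply, sum_div, mul_sum, Pi.div_apply]
        exact sum_congr rfl fun i _ => sum_congr rfl fun j _ => by ring

end IsRounding

lemma MKPFeasible.isFlow {z : Fin n → Option (Fin m)} (hs : ∀ i, 0 ≤ s i)
    (hz : MKPFeasible s c E z) :
    IsFlow s c (FittingEdge s c E) fun i j => s i * assignMatrix z i j := by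
  have hfit : ∀ i j, z i = some j → FittingEdge s c E i j := fun i j hij =>
    ⟨hz.1 i j hij, (single_le_sum (fun i _ => hs i) (by simpa using hij)).trans (hz.2 j)⟩
  refine ⟨⟨fun i j => ?_, fun i j hF => ?_, fun j => ?_⟩, fun i => ?_⟩
  · exact mul_nonneg (hs i) (ite_nonneg zero_le_one le_rfl)
  · rw [assignMatrix, if_neg (mt (hfit i j) hF), mul_zero]
  · rw [← sum_filter_eq_some]
    exact hz.2 j
  · rw [outflow_apply, ← mul_sum]
    refine mul_le_of_le_one_right (hs i) ?_
    cases h : z i <;> simp [assignMatrix, h]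

lemma div_dotProduct_outflow_mul_assignMatrix (hs : ∀ i, s i ≠ 0) (v : Fin n → ℝ)
    (x : Fin n → Option (Fin m)) :
    (v / s) ⬝ᵥ outflow (fun i j => s i * assignMatrix x i j) = MKPWelfare v x := by
  rw [mkpWelfare_eq_dotProduct]
  refine sum_congr rfl fun i _ => ?_
  rw [Pi.div_apply, outflow_apply, outflow_apply, ← mul_sum, ← mul_assoc,
    div_mul_cancel₀ _ (hs i)]

lemma IsFlow.sum_filter_mem_eq_sum_filter_fittingEdge {E' : Finset (Fin n × Fin m)}
    [∀ i j, Decidable (FittingEdge s c E i j)]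
    (hu : IsFlow s c (FittingEdge s c E') u) (i : Fin n) :
    ∑ j with (i, j) ∈ E, u i j = ∑ j with FittingEdge s c E i j, u i j := by
  simp only [sum_filter]
  refine sum_congr rfl fun j _ => ?_
  by_cases hF : FittingEdge s c E' i j
  · simp [FittingEdge, hF.2]
  · simp [hu.eq_zero i j hF]

lemma IsGreedyFlow.sum_filter_mem_le_sum_filter_mem {W : Fin n → ℝ} {E' : Finset (Fin n × Fin m)}
    {y y' : Fin n → Fin m → ℝ} (hW : Function.Injective W)
    (hy : IsGreedyFlow W s c (FittingEdge s c E) y)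
    (hy' : IsGreedyFlow W s c (FittingEdge s c E') y') (i : Fin n)
    (hE : ∀ k ≠ i, ∀ j, (k, j) ∈ E ↔ (k, j) ∈ E') :
    ∑ j with (i, j) ∈ E, y' i j ≤ ∑ j with (i, j) ∈ E, y i j := by
  classical
  rw [hy'.sum_filter_mem_eq_sum_filter_fittingEdge, hy.sum_filter_eq_outflow fun j h => h.1]
  exact hy.sum_filter_le_outflow hW hy' i fun k hk j => and_congr_left' (hE k hk j)

end Rounding

/-- There is a 2-approximate, truthful-in-expectation mechanism without money
for the multiple knapsack problem in the private graph model. -/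
theorem stmt14 (n m : ℕ) (v s : Fin n → ℝ) (c : Fin m → ℝ)
    (hv : ∀ i, 0 ≤ v i) (hs : ∀ i, 0 < s i) (hc : ∀ j, 0 ≤ c j) :
    ∃ A : Finset (Fin n × Fin m) → (Fin n → Option (Fin m)) → ℝ,
      (∀ E x, 0 ≤ A E x) ∧
      (∀ E, ∑ x : Fin n → Option (Fin m), A E x = 1) ∧
      (∀ E x, A E x ≠ 0 → MKPFeasible s c E x) ∧
      (∀ (E Ei' : Finset (Fin n × Fin m)) (i : Fin n), (∀ e ∈ Ei', e.1 = i) →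
        ∑ x : Fin n → Option (Fin m),
            A ((E \ E.filter (fun e => e.1 = i)) ∪ Ei') x *
              ∑ j ∈ Finset.univ.filter (fun j => (i, j) ∈ E ∧ x i = some j), v i
          ≤ ∑ x : Fin n → Option (Fin m),
              A E x * ∑ j ∈ Finset.univ.filter (fun j => (i, j) ∈ E ∧ x i = some j), v i) ∧
      (∀ E z, MKPFeasible s c E z →
        MKPWelfare v z ≤ 2 * ∑ x : Fin n → Option (Fin m), A E x * MKPWelfare v x) := by
  obtain ⟨W, hW, hW_pos, hW_lt⟩ := exists_injective_pos_of_lt_imp_lt (v / s)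
  choose u hu using fun E => exists_isGreedyFlow hW_pos (fun i => (hs i).le) hc (FittingEdge s c E)
  choose p hp using fun E => (hu E).exists_isRounding hs
  refine ⟨p, fun E => (hp E).nonneg, fun E => (hp E).sum_eq_one, fun E => (hp E).mkpFeasible,
    fun E Ei' i hEi' => ?_, fun E z hz => ?_⟩
  · rw [(hp _).sum_mul_sum_filter, (hp E).sum_mul_sum_filter]
    refine mul_le_mul_of_nonneg_left ?_ (div_nonneg (div_nonneg (hv i) (hs i).le) zero_le_two)
    refine (hu E).sum_filter_mem_le_sum_filter_mem hW (hu _) i fun k hk j => ?_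
    have hkj : (k, j) ∉ Ei' := fun h => hk (hEi' _ h)
    simp [hk, hkj]
  · have hz' := hz.isFlow fun i => (hs i).le
    rw [(hp E).sum_mul_mkpWelfare, mul_div_cancel₀ _ two_ne_zero,
      ← div_dotProduct_outflow_mul_assignMatrix (fun i => (hs i).ne')]
    exact (hu E).dotProduct_outflow_le (fun i => div_nonneg (hv i) (hs i).le) hW_lt hz'
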